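/- Let A be an m×n integer matrix, let f_1, …, f_n : ℤ → ℝ, let l, u ∈ ℤ^n, and let 1 ≤ j ≤ n. Then for every s ∈ ℤ^m and η ∈ ℕ, the partial optimum over the first j columns obeys the dynamic-programming recurrence V_{{1,…,j}}(s, η) = min { f_j(c) + V_{{1,…,j−1}}(s − c·A_{•,j}, η − |c|) : c ∈ ℤ, |c| ≤ η, l_j ≤ c ≤ u_j }, where the minimum over an empty set is +∞ and addition in ℝ ∪ {+∞} is with +∞ absorbing. -/

import Mathlib

/-- The partial optimum `V_S(r, η)`: the infimum (in `ℝ ∪ {+∞}`, modelled by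
`EReal`, where the infimum of the empty set is `⊤ = +∞`) of `∑ i ∈ S, f i (g i)`
over integer vectors `g` (only the coordinates in `S` matter) satisfying
`∑ i ∈ S, g i • A_{•,i} = r`, `l i ≤ g i ≤ u i` for all `i ∈ S`, and
`∑ i ∈ S, |g i| = η`. Note that for `S = ∅` this gives `0` if `r = 0` and
`η = 0`, and `+∞` otherwise. -/
noncomputable def partialOpt {m n : ℕ} (A : Matrix (Fin m) (Fin n) ℤ)
    (f : Fin n → ℤ → ℝ) (l u : Fin n → ℤ) (S : Finset (Fin n))
    (r : Fin m → ℤ) (η : ℕ) : EReal :=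
  sInf { z : EReal | ∃ g : Fin n → ℤ,
    (∀ j, ∑ i ∈ S, g i * A j i = r j) ∧
    (∀ i ∈ S, l i ≤ g i ∧ g i ≤ u i) ∧
    (∑ i ∈ S, |g i| = (η : ℤ)) ∧
    z = ((∑ i ∈ S, f i (g i) : ℝ) : EReal) }

/-- The set `{1, …, j}` of the first `j` column indices (0-indexed as
`{i : Fin n | (i : ℕ) < j}`). -/
def firstCols (n j : ℕ) : Finset (Fin n) := Finset.univ.filter (fun i => (i : ℕ) < j)

/-!
Feasible vectors on `insert k S` correspond to pairs of a value `c` at `k` and a feasible vector on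
`S` for the right-hand side and the `ℓ¹`-budget left over by `c`. The objective is additive along
this correspondence, and adding a real number commutes with infima in `EReal`, so the infimum over
the pairs may be taken over the vectors on `S` first.
-/

lemma ereal_coe_add_iInf {ι : Sort*} (a : ℝ) (h : ι → EReal) :
    (a : EReal) + ⨅ i, h i = ⨅ i, (a : EReal) + h i := by
  have gc : GaloisConnection (fun x : EReal ↦ x - a) (fun y ↦ (a : EReal) + y) := fun x y ↦ by
    simp only [add_comm (a : EReal)]
    exact EReal.sub_le_iff_le_add (.inl (EReal.coe_ne_bot a)) (.inl (EReal.coe_ne_top a))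
  exact gc.u_iInf

/-- Feasibility of `g` for the partial problem on the index set `S`: the constraints under which
`partialOpt` minimizes. As there, `g` is defined on all indices but only
its values on `S` matter. The budget `η` lies in the ring, so that `η - |c|` is a true difference
and not a truncated one. -/
structure IsFeasibleOn {κ ι R : Type*} [Ring R] [Lattice R] (A : Matrix κ ι R) (l u : ι → R)
    (S : Finset ι) (r : κ → R) (η : R) (g : ι → R) : Prop where
  sum_mul_eq : ∀ j, ∑ i ∈ S, g i * A j i = r j
  bounds : ∀ i ∈ S, l i ≤ g i ∧ g i ≤ u i
  sum_abs_eq : ∑ i ∈ S, |g i| = η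

namespace IsFeasibleOn

variable {κ ι R : Type*} [Ring R] [Lattice R] {A : Matrix κ ι R} {l u g g' : ι → R}
  {S : Finset ι} {r : κ → R} {η : R} {k : ι}

lemma congr (hg : IsFeasibleOn A l u S r η g) (h : ∀ i ∈ S, g' i = g i) :
    IsFeasibleOn A l u S r η g' where
  sum_mul_eq j := by
    rw [← hg.sum_mul_eq j]
    exact Finset.sum_congr rfl fun i hi ↦ by rw [h i hi]
  bounds i hi := by
    rw [h i hi]
    exact hg.bounds i hi
  sum_abs_eq := by
    rw [← hg.sum_abs_eq]
    exact Finset.sum_congr rfl fun i hi ↦ by rw [h i hi]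

lemma abs_apply_le [IsOrderedAddMonoid R] (hg : IsFeasibleOn A l u S r η g) (hk : k ∈ S) :
    |g k| ≤ η :=
  hg.sum_abs_eq ▸ Finset.single_le_sum (f := fun i ↦ |g i|) (fun i _ ↦ abs_nonneg (g i)) hk

end IsFeasibleOn

lemma isFeasibleOn_insert_iff {κ ι R : Type*} [Ring R] [Lattice R] [DecidableEq ι]
    {A : Matrix κ ι R} {l u g : ι → R} {S : Finset ι} {r : κ → R} {η : R} {k : ι} (hk : k ∉ S) :
    IsFeasibleOn A l u (insert k S) r η g ↔
      (l k ≤ g k ∧ g k ≤ u k) ∧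
        IsFeasibleOn A l u S (fun j ↦ r j - g k * A j k) (η - |g k|) g := by
  constructor
  · rintro ⟨hmul, hbounds, habs⟩
    simp only [Finset.sum_insert hk] at hmul habs
    rw [Finset.forall_mem_insert] at hbounds
    exact ⟨hbounds.1, fun j ↦ eq_sub_of_add_eq' (hmul j), hbounds.2, eq_sub_of_add_eq' habs⟩
  · rintro ⟨hbound, hmul, hbounds, habs⟩
    refine ⟨fun j ↦ ?_, (Finset.forall_mem_insert ..).2 ⟨hbound, hbounds⟩, ?_⟩
    · rw [Finset.sum_insert hk, hmul, add_sub_cancel]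
    · rw [Finset.sum_insert hk, habs, add_sub_cancel]

lemma natCast_sub_natAbs {η : ℕ} {c : ℤ} (hc : |c| ≤ η) :
    ((η - c.natAbs : ℕ) : ℤ) = η - |c| := by
  have := Int.natCast_natAbs c
  omega

section PartialOpt

variable {m n : ℕ} {A : Matrix (Fin m) (Fin n) ℤ} {f : Fin n → ℤ → ℝ} {l u : Fin n → ℤ}
  {S : Finset (Fin n)} {r : Fin m → ℤ} {η : ℕ} {k : Fin n}

lemma partialOpt_eq_iInf :
    partialOpt A f l u S r η =
      ⨅ (g : Fin n → ℤ) (_ : IsFeasibleOn A l u S r η g),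
        ((∑ i ∈ S, f i (g i) : ℝ) : EReal) := by
  apply le_antisymm
  · exact le_iInf₂ fun g hg ↦ sInf_le ⟨g, hg.sum_mul_eq, hg.bounds, hg.sum_abs_eq, rfl⟩
  · apply le_sInf
    rintro _ ⟨g, hmul, hbounds, habs, rfl⟩
    exact iInf₂_le g ⟨hmul, hbounds, habs⟩

lemma IsFeasibleOn.partialOpt_le {g : Fin n → ℤ} (hg : IsFeasibleOn A l u S r η g) :
    partialOpt A f l u S r η ≤ ((∑ i ∈ S, f i (g i) : ℝ) : EReal) :=
  partialOpt_eq_iInf.trans_le (iInf₂_le g hg)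

lemma partialOpt_insert_le (hk : k ∉ S) {c : ℤ} (hc : |c| ≤ η) (hlu : l k ≤ c ∧ c ≤ u k) :
    partialOpt A f l u (insert k S) r η ≤
      (f k c : EReal) + partialOpt A f l u S (fun j ↦ r j - c * A j k) (η - c.natAbs) := by
  simp only [partialOpt_eq_iInf (S := S), ereal_coe_add_iInf]
  refine le_iInf₂ fun g hg ↦ ?_
  set g' := Function.update g k c
  have hg'k : g' k = c := Function.update_self ..
  have hg'S : ∀ i ∈ S, g' i = g i := fun i hi ↦
    Function.update_of_ne (ne_of_mem_of_not_mem hi hk) ..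
  have hg' : IsFeasibleOn A l u (insert k S) r η g' := by
    rw [natCast_sub_natAbs hc] at hg
    rw [isFeasibleOn_insert_iff hk, hg'k]
    exact ⟨hlu, hg.congr hg'S⟩
  calc partialOpt A f l u (insert k S) r η
      ≤ ((∑ i ∈ insert k S, f i (g' i) : ℝ) : EReal) := hg'.partialOpt_le
    _ = (f k c : EReal) + ((∑ i ∈ S, f i (g i) : ℝ) : EReal) := by
      rw [Finset.sum_insert hk, hg'k, Finset.sum_congr rfl fun i hi ↦ by rw [hg'S i hi],
        EReal.coe_add]

lemma IsFeasibleOn.add_partialOpt_le {g : Fin n → ℤ} (hk : k ∉ S)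
    (hg : IsFeasibleOn A l u (insert k S) r η g) :
    (f k (g k) : EReal) +
        partialOpt A f l u S (fun j ↦ r j - g k * A j k) (η - (g k).natAbs) ≤
      ((∑ i ∈ insert k S, f i (g i) : ℝ) : EReal) := by
  have habs : |g k| ≤ η := hg.abs_apply_le (Finset.mem_insert_self k S)
  have hgS := ((isFeasibleOn_insert_iff hk).1 hg).2
  rw [← natCast_sub_natAbs habs] at hgS
  rw [Finset.sum_insert hk, EReal.coe_add]
  gcongr
  exact hgS.partialOpt_le

end PartialOpt

theorem partialOpt_dp_recurrence_general {m n : ℕ}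
    (A : Matrix (Fin m) (Fin n) ℤ) (f : Fin n → ℤ → ℝ) (l u : Fin n → ℤ)
    {S : Finset (Fin n)} {k : Fin n} (hk : k ∉ S) (s : Fin m → ℤ) (η : ℕ) :
    partialOpt A f l u (insert k S) s η =
      sInf { z : EReal | ∃ c : ℤ, |c| ≤ (η : ℤ) ∧ l k ≤ c ∧ c ≤ u k ∧
        z = (f k c : EReal) +
          partialOpt A f l u S (fun i ↦ s i - c * A i k) (η - c.natAbs) } := by
  apply le_antisymm
  · apply le_sInf
    rintro _ ⟨c, hc, hl, hu, rfl⟩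
    exact partialOpt_insert_le hk hc ⟨hl, hu⟩
  · rw [partialOpt_eq_iInf]
    refine le_iInf₂ fun g hg ↦ sInf_le_of_le ?_ (hg.add_partialOpt_le hk)
    obtain ⟨hl, hu⟩ := hg.bounds k (Finset.mem_insert_self k S)
    exact ⟨g k, hg.abs_apply_le (Finset.mem_insert_self k S), hl, hu, rfl⟩

lemma firstCols_succ {n j : ℕ} (hj : j < n) :
    firstCols n (j + 1) = insert ⟨j, hj⟩ (firstCols n j) := by
  ext i
  simp only [firstCols, Finset.mem_filter, Finset.mem_univ, true_and, Finset.mem_insert,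
    Fin.ext_iff]
  omega

lemma notMem_firstCols {n : ℕ} (k : Fin n) : k ∉ firstCols n k := by
  simp [firstCols]

/-- For `1 ≤ j ≤ n`, every `s ∈ ℤ^m` and `η ∈ ℕ`, the partial
optimum over the first `j` columns obeys the dynamic-programming recurrence
`V_{{1,…,j}}(s, η) = min { f_j(c) + V_{{1,…,j−1}}(s − c·A_{•,j}, η − |c|) :
c ∈ ℤ, |c| ≤ η, l_j ≤ c ≤ u_j }`, with the minimum over the empty set being
`+∞` and `+∞` absorbing for addition. -/
theorem partialOpt_dp_recurrence {m n : ℕ}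
    (A : Matrix (Fin m) (Fin n) ℤ) (f : Fin n → ℤ → ℝ) (l u : Fin n → ℤ)
    (j : ℕ) (hj1 : 1 ≤ j) (hjn : j ≤ n) (s : Fin m → ℤ) (η : ℕ) :
    partialOpt A f l u (firstCols n j) s η =
      sInf { z : EReal | ∃ c : ℤ, |c| ≤ (η : ℤ) ∧
        l ⟨j - 1, by omega⟩ ≤ c ∧ c ≤ u ⟨j - 1, by omega⟩ ∧
        z = ((f ⟨j - 1, by omega⟩ c : ℝ) : EReal) +
          partialOpt A f l u (firstCols n (j - 1))
            (fun i => s i - c * A i ⟨j - 1, by omega⟩) (η - c.natAbs) } := by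
  obtain ⟨j, rfl⟩ := Nat.exists_eq_add_of_le' hj1
  rw [firstCols_succ hjn]
  exact partialOpt_dp_recurrence_general A f l u (notMem_firstCols ⟨j, hjn⟩) s η
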